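/- If P satisfies a margin condition with radius r_0 and is ε-separated, then for all c ∈ B(0,M)^k, ‖c − c*(c)‖² ≤ κ_0 ℓ(c, c*(c)), where c*(c) ∈ argmin_{c* ∈ M} ‖c − c*‖ is an optimal codebook nearest to c and κ_0 = 4kM² · max(1/ε, 64 M² / (p_min B² r_0²)). -/

import Mathlib

open MeasureTheory Metric

noncomputable section

variable {H : Type*} [NormedAddCommGroup H] [InnerProductSpace ℝ H] [MeasurableSpace H]

/-- `qgamma k c x = min_j ‖x - c j‖²`. -/
def qgamma (k : ℕ) (c : Fin k → H) (x : H) : ℝ := ⨅ j : Fin k, ‖x - c j‖ ^ 2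

/-- distortion (risk) of a codebook. -/
def qrisk (k : ℕ) (P : Measure H) (c : Fin k → H) : ℝ := ∫ x, qgamma k c x ∂P

/-- the set of optimal codebooks. -/
def qopt (k : ℕ) (P : Measure H) : Set (Fin k → H) :=
  {c | ∀ c' : Fin k → H, qrisk k P c ≤ qrisk k P c'}

/-- the `i`-th (closed) Voronoi cell of the codebook `c`. -/
def vcell (k : ℕ) (c : Fin k → H) (i : Fin k) : Set H :=
  {x | ∀ j : Fin k, ‖x - c i‖ ≤ ‖x - c j‖}

/-- `B`, the minimal separation between code points of optimal codebooks. -/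
def qB (k : ℕ) (P : Measure H) : ℝ :=
  sInf {b | ∃ c ∈ qopt k P, ∃ i j : Fin k, i ≠ j ∧ b = ‖c i - c j‖}

/-- `p_min`, the minimal mass of a Voronoi cell of an optimal codebook. -/
def qpmin (k : ℕ) (P : Measure H) : ℝ :=
  sInf {p | ∃ c ∈ qopt k P, ∃ i : Fin k, p = (P (vcell k c i)).toReal}

/-- `N_{c*}`, the union of the boundaries between Voronoi cells. -/
def nbd (k : ℕ) (c : Fin k → H) : Set H :=
  ⋃ (i : Fin k) (j : Fin k) (_ : i ≠ j), vcell k c i ∩ vcell k c j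

/-- the weight function `p(t)`, the maximal mass of the closed `t`-neighborhood
of `N_{c*}` over optimal codebooks `c*`. -/
def pweight (k : ℕ) (P : Measure H) (t : ℝ) : ℝ :=
  sSup {p | ∃ c ∈ qopt k P, p = (P (cthickening t (nbd k c))).toReal}

/-- `P` is `M`-bounded: its support is contained in the closed ball `B(0,M)`. -/
def mbounded (P : Measure H) (M : ℝ) : Prop := P (closedBall (0 : H) M)ᶜ = 0

/-- the support of `P` contains more than `k` points. -/
def suppGT (P : Measure H) (k : ℕ) : Prop :=
  ∀ S : Finset H, S.card ≤ k → P ((S : Set H)ᶜ) ≠ 0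

/-- the margin condition with radius `r0`. -/
def margin (k : ℕ) (P : Measure H) (M r0 : ℝ) : Prop :=
  0 < r0 ∧ mbounded P M ∧
    ∀ t : ℝ, 0 ≤ t → t ≤ r0 → pweight k P t ≤ qB k P * qpmin k P * t / (128 * M ^ 2)

/-- `P` is `ε`-separated: the infimum of the excess risk over local minimizers of
the distortion which are not optimal codebooks equals `ε`. -/
def qseparated (k : ℕ) (P : Measure H) (ε : ℝ) : Prop :=
  ∀ cs ∈ qopt k P,
    sInf {r | ∃ c : Fin k → H, IsLocalMin (qrisk k P) c ∧ c ∉ qopt k P ∧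
      r = qrisk k P c - qrisk k P cs} = ε

/-!
Write `B`, `p`, `N` for the minimal code point distance, the minimal cell mass and the cell
boundaries of the optimal codebooks `c*`.

Near an optimal codebook the excess risk grows quadratically. The code points of `c*` are the
centroids of their cells, so `∑ P(Vᵢ(c*)) ‖cᵢ - c*ᵢ‖²` is the excess risk of coding every point by
the code point of `c` with its optimal index. The gain from using the nearest one instead is at most
`8M‖c - c*‖` per point, and occurs only within `4M‖c - c*‖ / B` of `N`; as long as this
distance is at most `r₀`, the margin condition absorbs a loss of `p‖c - c*‖² / 4`.

So the spheres of radius `B r₀ / (4M)` around the optimal codebooks form a barrier. If a codebook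
outside of them has a smaller risk than the barrier, then minimizing the risk over the far codebooks
yields a local minimizer which is not optimal, and the separation applies. In infinite dimension the
minimum exists because the risk along the whole segment from `uₙ` to its weak limit `y` is, in the
limit, at most the risk of `uₙ`, so that this segment does not cross the barrier.
-/

open Filter Topology
open scoped RealInnerProductSpace

section HilbertSpace

variable {E : Type*} [NormedAddCommGroup E]

lemma norm_sub_sq_le_add {M : ℝ} {x a b : E} (hx : ‖x‖ ≤ M) (ha : ‖a‖ ≤ M) (hb : ‖b‖ ≤ M) :
    ‖x - a‖ ^ 2 ≤ ‖x - b‖ ^ 2 + 4 * M * ‖a - b‖ := by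
  have htri : ‖x - a‖ ≤ ‖x - b‖ + ‖a - b‖ := by simpa using norm_sub_le (x - b) (a - b)
  have hxa : ‖x - a‖ ≤ 2 * M := by linarith [norm_sub_le x a]
  have hxb : ‖x - b‖ ≤ 2 * M := by linarith [norm_sub_le x b]
  nlinarith [norm_nonneg (a - b), norm_nonneg (x - a), norm_nonneg (x - b)]

lemma norm_lineMap_le [NormedSpace ℝ E] {M t : ℝ} {a b : E} (ha : ‖a‖ ≤ M) (hb : ‖b‖ ≤ M)
    (ht : t ∈ Set.Icc (0 : ℝ) 1) : ‖AffineMap.lineMap a b t‖ ≤ M := by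
  rw [← mem_closedBall_zero_iff] at ha hb ⊢
  exact (convex_closedBall 0 M).lineMap_mem ha hb ht

section Pi

variable {ι : Type*} [Fintype ι]

lemma norm_sub_sq_le_sum (a b : ι → E) : ‖a - b‖ ^ 2 ≤ ∑ i, ‖a i - b i‖ ^ 2 := by
  have hsum : 0 ≤ ∑ i, ‖a i - b i‖ ^ 2 := Finset.sum_nonneg fun _ _ ↦ by positivity
  refine (Real.le_sqrt (norm_nonneg _) hsum).1 ((pi_norm_le_iff_of_nonneg (Real.sqrt_nonneg _)).2
    fun i ↦ Real.le_sqrt_of_sq_le ?_)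
  exact Finset.single_le_sum (f := fun i ↦ ‖a i - b i‖ ^ 2) (fun _ _ ↦ by positivity)
    (Finset.mem_univ i)

lemma sum_norm_sub_sq_le {M : ℝ} {a b : ι → E} (ha : ‖a‖ ≤ M) (hb : ‖b‖ ≤ M) :
    ∑ i, ‖a i - b i‖ ^ 2 ≤ 4 * Fintype.card ι * M ^ 2 := by
  have hterm : ∀ i, ‖a i - b i‖ ^ 2 ≤ (2 * M) ^ 2 := fun i ↦ by
    gcongr
    linarith [norm_sub_le (a i) (b i), (norm_le_pi_norm a i).trans ha,
      (norm_le_pi_norm b i).trans hb]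
  refine (Finset.sum_le_card_nsmul _ _ _ fun i _ ↦ hterm i).trans_eq ?_
  rw [nsmul_eq_mul, Finset.card_univ]
  ring

lemma exists_sum_norm_lineMap_sub_sq_eq [NormedSpace ℝ E] {a z y : ι → E} {r : ℝ}
    (ha : r ≤ ∑ i, ‖a i - y i‖ ^ 2) (hz : ∑ i, ‖z i - y i‖ ^ 2 ≤ r) :
    ∃ t ∈ Set.Icc (0 : ℝ) 1, ∑ i, ‖(AffineMap.lineMap a z t : ι → E) i - y i‖ ^ 2 = r := by
  have hcont : Continuous fun t : ℝ ↦ ∑ i, ‖(AffineMap.lineMap a z t : ι → E) i - y i‖ ^ 2 := by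
    simp only [AffineMap.pi_lineMap_apply, AffineMap.lineMap_apply_module]
    fun_prop
  exact intermediate_value_Icc' zero_le_one hcont.continuousOn
    ⟨by simpa using hz, by simpa using ha⟩

end Pi

variable [InnerProductSpace ℝ E]

lemma exists_mem_forall_norm_sub_le {K : Set E} (hne : K.Nonempty) (hK : IsComplete K)
    (hconv : Convex ℝ K) (y : E) : ∃ z ∈ K, ∀ x ∈ K, ‖x - z‖ ≤ ‖x - y‖ := by
  obtain ⟨z, hz, hmin⟩ := exists_norm_eq_iInf_of_complete_convex hne hK hconv y
  refine ⟨z, hz, fun x hx ↦ le_of_sq_le_sq ?_ (norm_nonneg _)⟩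
  have hobtuse : ⟪y - z, x - z⟫ ≤ 0 :=
    (norm_eq_iInf_iff_real_inner_le_zero hconv hz).1 hmin x hx
  rw [← sub_sub_sub_cancel_right x y z, norm_sub_sq_real (x - z), real_inner_comm]
  nlinarith [sq_nonneg ‖y - z‖]

lemma norm_sub_lineMap_sq_le (x u y : E) {t : ℝ} (ht : t ∈ Set.Icc (0 : ℝ) 1) :
    ‖x - AffineMap.lineMap u y t‖ ^ 2 ≤ ‖x - u‖ ^ 2 + 2 * |⟪x - y, u - y⟫| := by
  obtain ⟨ht0, ht1⟩ := ht
  have hline : x - AffineMap.lineMap u y t = (x - y) - (1 - t) • (u - y) := by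
    rw [AffineMap.lineMap_apply_module']; module
  have hendpoint : x - u = (x - y) - (u - y) := by abel
  rw [hline, hendpoint, norm_sub_sq_real, norm_sub_sq_real (x - y) (u - y), inner_smul_right,
    norm_smul, mul_pow, Real.norm_eq_abs, sq_abs]
  have hcross : t * ⟪x - y, u - y⟫ ≤ |⟪x - y, u - y⟫| := by
    nlinarith [le_abs_self ⟪x - y, u - y⟫, abs_nonneg ⟪x - y, u - y⟫]
  have hsq : (1 - t) ^ 2 * ‖u - y‖ ^ 2 ≤ ‖u - y‖ ^ 2 :=
    mul_le_of_le_one_left (sq_nonneg _) (by nlinarith)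
  linarith

lemma exists_subseq_tendsto_inner [CompleteSpace E] [SecondCountableTopology E] {r : ℝ}
    {u : ℕ → E} (hu : ∀ n, ‖u n‖ ≤ r) :
    ∃ (y : E) (φ : ℕ → ℕ), StrictMono φ ∧
      ∀ x, Tendsto (fun n ↦ ⟪x, u (φ n)⟫) atTop (𝓝 ⟪x, y⟫) := by
  let v : ℕ → WeakDual ℝ E := fun n ↦ StrongDual.toWeakDual (InnerProductSpace.toDual ℝ E (u n))
  have hv : ∀ n, v n ∈ WeakDual.toStrongDual ⁻¹' closedBall (0 : StrongDual ℝ E) r := by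
    intro n
    rw [Set.mem_preimage, mem_closedBall_zero_iff]
    exact ((InnerProductSpace.toDual ℝ E).norm_map (u n)).le.trans (hu n)
  obtain ⟨a, -, φ, hφ, hlim⟩ := WeakDual.isSeqCompact_closedBall ℝ E 0 r hv
  refine ⟨(InnerProductSpace.toDual ℝ E).symm (WeakDual.toStrongDual a), φ, hφ, fun x ↦ ?_⟩
  simp_rw [real_inner_comm _ x, InnerProductSpace.toDual_symm_apply]
  exact ((WeakDual.eval_continuous x).tendsto a).comp hlim

lemma integral_norm_sub_sq_sub_norm_sub_sq [CompleteSpace E] [MeasurableSpace E] {μ : Measure E}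
    [IsFiniteMeasure μ] (hμ : Integrable (fun x : E ↦ x) μ) (a y : E) :
    ∫ x, (‖x - y‖ ^ 2 - ‖x - a‖ ^ 2) ∂μ =
      μ.real Set.univ * ‖y - a‖ ^ 2 - 2 * ⟪y - a, ∫ x, (x - a) ∂μ⟫ := by
  have hint : Integrable (fun x ↦ x - a) μ := hμ.sub (integrable_const a)
  have hexpand : ∀ x, ‖x - y‖ ^ 2 - ‖x - a‖ ^ 2 = ‖y - a‖ ^ 2 - 2 * ⟪y - a, x - a⟫ := by
    intro x
    rw [← sub_sub_sub_cancel_right x y a, norm_sub_sq_real, real_inner_comm]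
    ring
  simp_rw [hexpand]
  rw [integral_sub (integrable_const _) ((hint.const_inner _).const_mul _), integral_const,
    integral_const_mul, integral_inner hint, smul_eq_mul]

end HilbertSpace

section Distortion

variable {E : Type*} [NormedAddCommGroup E] {k : ℕ}

lemma qgamma_le (c : Fin k → E) (x : E) (j : Fin k) : qgamma k c x ≤ ‖x - c j‖ ^ 2 :=
  ciInf_le (Set.finite_range _).bddBelow j

lemma qgamma_nonneg (c : Fin k → E) (x : E) : 0 ≤ qgamma k c x :=
  Real.iInf_nonneg fun _ ↦ by positivity

lemma qgamma_eq_iff_mem_vcell {c : Fin k → E} {x : E} {i : Fin k} :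
    qgamma k c x = ‖x - c i‖ ^ 2 ↔ x ∈ vcell k c i := by
  have : Nonempty (Fin k) := ⟨i⟩
  refine ⟨fun h j ↦ le_of_sq_le_sq (h ▸ qgamma_le c x j) (norm_nonneg _), fun h ↦ ?_⟩
  exact (qgamma_le c x i).antisymm (le_ciInf fun j ↦ by gcongr; exact h j)

lemma exists_mem_vcell [Nonempty (Fin k)] (c : Fin k → E) (x : E) : ∃ i, x ∈ vcell k c i := by
  obtain ⟨i, hi⟩ := exists_eq_ciInf_of_finite (f := fun i ↦ ‖x - c i‖ ^ 2)
  exact ⟨i, qgamma_eq_iff_mem_vcell.1 hi.symm⟩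

lemma mem_vcell_self (c : Fin k → E) (i : Fin k) : c i ∈ vcell k c i := fun j ↦ by simp

lemma isClosed_vcell (c : Fin k → E) (i : Fin k) : IsClosed (vcell k c i) := by
  simp only [vcell, Set.ofPred_forall]
  exact isClosed_iInter fun j ↦ isClosed_le (by fun_prop) (by fun_prop)

lemma continuous_qgamma [Nonempty (Fin k)] (c : Fin k → E) : Continuous (qgamma k c) := by
  have hinf : qgamma k c =
      fun x ↦ Finset.univ.inf' Finset.univ_nonempty fun j ↦ ‖x - c j‖ ^ 2 := by
    funext x
    rw [Finset.inf'_univ_eq_ciInf]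
    rfl
  rw [hinf]
  exact Continuous.finset_inf'_apply _ fun _ _ ↦ by fun_prop

lemma qgamma_update_le [Nonempty (Fin k)] {c : Fin k → E} {i j : Fin k} (hij : i ≠ j)
    (heq : c i = c j) (x y : E) : qgamma k (Function.update c i y) x ≤ qgamma k c x := by
  obtain ⟨l, hl⟩ := exists_mem_vcell c x
  rw [qgamma_eq_iff_mem_vcell.2 hl]
  by_cases hli : l = i
  · simpa [hli, heq, hij.symm] using qgamma_le (Function.update c i y) x j
  · simpa [hli] using qgamma_le (Function.update c i y) x l

lemma norm_sub_sq_le_of_mem_vcell {M : ℝ} {c c' : Fin k → E} {x : E} {i : Fin k} (hx : ‖x‖ ≤ M)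
    (hc : ‖c‖ ≤ M) (hc' : ‖c'‖ ≤ M) (hxi : x ∈ vcell k c i) (j : Fin k) :
    ‖x - c' i‖ ^ 2 ≤ ‖x - c' j‖ ^ 2 + 8 * M * ‖c - c'‖ := by
  have hM : 0 ≤ M := (norm_nonneg x).trans hx
  have hperturb : ∀ l, 4 * M * ‖c l - c' l‖ ≤ 4 * M * ‖c - c'‖ := fun l ↦ by
    gcongr; exact norm_le_pi_norm (c - c') l
  have hc'i := norm_sub_sq_le_add hx ((norm_le_pi_norm c' i).trans hc')
    ((norm_le_pi_norm c i).trans hc)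
  have hcj := norm_sub_sq_le_add hx ((norm_le_pi_norm c j).trans hc)
    ((norm_le_pi_norm c' j).trans hc')
  have hcell : ‖x - c i‖ ^ 2 ≤ ‖x - c j‖ ^ 2 := by gcongr; exact hxi j
  rw [norm_sub_rev (c' i)] at hc'i
  linarith [hperturb i, hperturb j]

lemma inter_vcell_subset_nbd (c : Fin k → E) {i j : Fin k} (hij : i ≠ j) :
    vcell k c i ∩ vcell k c j ⊆ nbd k c :=
  fun _ hx ↦ Set.mem_iUnion₂.2 ⟨i, j, Set.mem_iUnion.2 ⟨hij, hx⟩⟩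

end Distortion

section VoronoiBoundary

variable {E : Type*} [NormedAddCommGroup E] [InnerProductSpace ℝ E] {k : ℕ}

-- The segment is connected and covered by two closed sets: `vcell k c i` and the other cells.
lemma exists_mem_segment_mem_nbd {c : Fin k → E} {x y : E} {i j : Fin k} (hij : i ≠ j)
    (hx : x ∈ vcell k c i) (hy : y ∈ vcell k c j) : ∃ z ∈ segment ℝ x y, z ∈ nbd k c := by
  have : Nonempty (Fin k) := ⟨i⟩
  have hcover : segment ℝ x y ⊆ vcell k c i ∪ ⋃ l ∈ {l | l ≠ i}, vcell k c l := by
    intro z _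
    obtain ⟨l, hl⟩ := exists_mem_vcell c z
    by_cases hli : l = i
    · exact Or.inl (hli ▸ hl)
    · exact Or.inr (Set.mem_biUnion hli hl)
  obtain ⟨z, hz, hzi, hzother⟩ := isPreconnected_closed_iff.1 (convex_segment x y).isPreconnected
    _ _ (isClosed_vcell c i) ((Set.toFinite _).isClosed_biUnion fun l _ ↦ isClosed_vcell c l)
    hcover ⟨x, left_mem_segment ℝ x y, hx⟩
    ⟨y, right_mem_segment ℝ x y, Set.mem_biUnion hij.symm hy⟩
  obtain ⟨l, hli, hzl⟩ := Set.mem_iUnion₂.1 hzother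
  exact ⟨z, hz, inter_vcell_subset_nbd c (Ne.symm hli) ⟨hzi, hzl⟩⟩

-- The point of `x + ℝ (c j - c i)` equidistant from `c i` and `c j` lies outside the interior of
-- the cell of `c i`, so the boundary is met on the way to it.
lemma exists_mem_nbd_norm_sub_le {c : Fin k → E} {x : E} {i j : Fin k} (hne : c i ≠ c j)
    (hx : x ∈ vcell k c i) :
    ∃ z ∈ nbd k c, ‖x - z‖ ≤ (‖x - c j‖ ^ 2 - ‖x - c i‖ ^ 2) / (2 * ‖c i - c j‖) := by
  have : Nonempty (Fin k) := ⟨i⟩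
  have hL : 0 < ‖c i - c j‖ := norm_pos_iff.2 (sub_ne_zero.2 hne)
  set T := (‖x - c j‖ ^ 2 - ‖x - c i‖ ^ 2) / (2 * ‖c i - c j‖ ^ 2) with hT
  have hT0 : 0 ≤ T := by
    have : ‖x - c i‖ ^ 2 ≤ ‖x - c j‖ ^ 2 := by gcongr; exact hx j
    exact div_nonneg (sub_nonneg.2 this) (by positivity)
  set y := x + T • (c j - c i) with hy
  have hequi : ‖y - c j‖ ^ 2 = ‖y - c i‖ ^ 2 := by
    have hexpand : ∀ w, ‖y - w‖ ^ 2 =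
        ‖x - w‖ ^ 2 + 2 * (T * ⟪x - w, c j - c i⟫) + ‖T • (c j - c i)‖ ^ 2 := fun w ↦ by
      rw [hy, add_sub_right_comm, norm_add_sq_real, inner_smul_right]
    have hinner : ⟪x - c i, c j - c i⟫ - ⟪x - c j, c j - c i⟫ = ‖c i - c j‖ ^ 2 := by
      rw [← inner_sub_left, sub_sub_sub_cancel_left, real_inner_self_eq_norm_sq, norm_sub_rev]
    have hTL : T * (2 * ‖c i - c j‖ ^ 2) = ‖x - c j‖ ^ 2 - ‖x - c i‖ ^ 2 :=
      div_mul_cancel₀ _ (by positivity)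
    rw [hexpand, hexpand]
    linear_combination (-2 * T) * hinner - hTL
  obtain ⟨l, hli, hyl⟩ : ∃ l, i ≠ l ∧ y ∈ vcell k c l := by
    obtain ⟨l, hl⟩ := exists_mem_vcell c y
    by_cases hli : i = l
    · subst hli
      refine ⟨j, ne_of_apply_ne c hne, qgamma_eq_iff_mem_vcell.1 ?_⟩
      rw [hequi, qgamma_eq_iff_mem_vcell.2 hl]
    · exact ⟨l, hli, hl⟩
  obtain ⟨z, hz, hzN⟩ := exists_mem_segment_mem_nbd hli hx hyl
  refine ⟨z, hzN, ?_⟩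
  calc ‖x - z‖ ≤ ‖x - y‖ := by
        simpa only [norm_sub_rev] using norm_sub_le_of_mem_segment hz
    _ = T * ‖c i - c j‖ := by
        rw [hy, sub_add_cancel_left, norm_neg, norm_smul, Real.norm_of_nonneg hT0, norm_sub_rev]
    _ = (‖x - c j‖ ^ 2 - ‖x - c i‖ ^ 2) / (2 * ‖c i - c j‖) := by
        rw [hT]; field_simp

lemma mem_cthickening_nbd {c : Fin k → E} {x : E} {i j : Fin k} {B s : ℝ} (hB : 0 < B)
    (hBij : B ≤ ‖c i - c j‖) (hs : 0 ≤ s) (hx : x ∈ vcell k c i)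
    (hxs : ‖x - c j‖ ^ 2 ≤ ‖x - c i‖ ^ 2 + s) : x ∈ cthickening (s / (2 * B)) (nbd k c) := by
  have hne : c i ≠ c j := sub_ne_zero.1 (norm_pos_iff.1 (hB.trans_le hBij))
  obtain ⟨z, hz, hxz⟩ := exists_mem_nbd_norm_sub_le hne hx
  refine mem_cthickening_of_dist_le x z _ _ hz ?_
  rw [dist_eq_norm]
  refine hxz.trans ?_
  gcongr
  linarith

lemma norm_sub_sq_sub_le_of_mem_vcell {c cs : Fin k → E} {B M : ℝ} (hB : 0 < B)
    (hBcs : ∀ i j, i ≠ j → B ≤ ‖cs i - cs j‖) (hc : ‖c‖ ≤ M) (hcs : ‖cs‖ ≤ M) {x : E}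
    (hx : ‖x‖ ≤ M) {i : Fin k} (hxi : x ∈ vcell k cs i) :
    ‖x - c i‖ ^ 2 - ‖x - cs i‖ ^ 2 ≤ qgamma k c x - qgamma k cs x +
      (cthickening (4 * M * ‖c - cs‖ / B) (nbd k cs)).indicator (fun _ ↦ 8 * M * ‖c - cs‖) x := by
  have : Nonempty (Fin k) := ⟨i⟩
  have hM : 0 ≤ M := (norm_nonneg x).trans hx
  obtain ⟨j, hj⟩ := exists_mem_vcell c x
  rw [qgamma_eq_iff_mem_vcell.2 hxi, qgamma_eq_iff_mem_vcell.2 hj]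
  by_cases hij : i = j
  · subst hij
    exact le_add_of_nonneg_right (Set.indicator_nonneg (fun _ _ ↦ by positivity) x)
  · have hclose : ‖x - cs j‖ ^ 2 ≤ ‖x - cs i‖ ^ 2 + 8 * M * ‖c - cs‖ :=
      norm_sub_sq_le_of_mem_vcell hx hc hcs hj i
    have hmem : x ∈ cthickening (4 * M * ‖c - cs‖ / B) (nbd k cs) := by
      have := mem_cthickening_nbd hB (hBcs i j hij) (by positivity) hxi hclose
      rwa [show 8 * M * ‖c - cs‖ / (2 * B) = 4 * M * ‖c - cs‖ / B by field_simp; ring] at this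
    have hloss := norm_sub_sq_le_of_mem_vcell hx hcs hc hxi j
    rw [norm_sub_rev cs c] at hloss
    rw [Set.indicator_of_mem hmem]
    linarith

end VoronoiBoundary

section WeakConvergence

variable {E : Type*} [NormedAddCommGroup E] [InnerProductSpace ℝ E] {k : ℕ}

/-- Weak convergence of a sequence of codebooks, code point by code point. -/
def WeaklyTendsto (u : ℕ → Fin k → E) (y : Fin k → E) : Prop :=
  ∀ i x, Tendsto (fun n ↦ ⟪x, u n i⟫) atTop (𝓝 ⟪x, y i⟫)

lemma WeaklyTendsto.norm_le [Nonempty (Fin k)] {u : ℕ → Fin k → E} {y : Fin k → E} {M : ℝ}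
    (h : WeaklyTendsto u y) (hu : ∀ n, ‖u n‖ ≤ M) : ‖y‖ ≤ M := by
  refine (pi_norm_le_iff_of_nonempty y).2 fun i ↦ ?_
  have hsq : ‖y i‖ * ‖y i‖ ≤ ‖y i‖ * M := by
    rw [← real_inner_self_eq_norm_mul_norm]
    refine le_of_tendsto' (h i (y i)) fun n ↦ (real_inner_le_norm _ _).trans ?_
    gcongr
    exact (norm_le_pi_norm (u n) i).trans (hu n)
  rcases (norm_nonneg (y i)).eq_or_lt with h0 | hpos
  · exact h0 ▸ (norm_nonneg _).trans (hu 0)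
  · exact le_of_mul_le_mul_left hsq hpos

lemma exists_weaklyTendsto_subseq [CompleteSpace E] [SecondCountableTopology E] {M : ℝ}
    {u : ℕ → Fin k → E} (hu : ∀ n, ‖u n‖ ≤ M) :
    ∃ (y : Fin k → E) (φ : ℕ → ℕ), StrictMono φ ∧ WeaklyTendsto (u ∘ φ) y := by
  have hbound : ∀ n, ‖WithLp.toLp 2 (u n)‖ ≤ √(∑ _i : Fin k, M ^ 2) := by
    intro n
    rw [PiLp.norm_eq_of_L2]
    gcongr with i
    exact (norm_le_pi_norm (u n) i).trans (hu n)
  obtain ⟨y, φ, hφ, hlim⟩ := exists_subseq_tendsto_inner hbound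
  refine ⟨y.ofLp, φ, hφ, fun i x ↦ ?_⟩
  have hsingle : ∀ w : PiLp 2 fun _ : Fin k ↦ E, ⟪WithLp.toLp 2 (Pi.single i x), w⟫ = ⟪x, w i⟫ := by
    intro w
    rw [PiLp.inner_apply, Finset.sum_eq_single i] <;> simp +contextual
  simpa only [hsingle, Function.comp_apply] using hlim (WithLp.toLp 2 (Pi.single i x))

/-- The cross term bounding, at `x` and along the whole segment from `u` to `y`, the increase of
the distortion; it vanishes as `u` converges weakly to `y`. -/
def weakDefect (u y : Fin k → E) (x : E) : ℝ := ∑ i, 2 * |⟪x - y i, u i - y i⟫|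

lemma qgamma_lineMap_le [Nonempty (Fin k)] (u y : Fin k → E) (x : E) {t : ℝ}
    (ht : t ∈ Set.Icc (0 : ℝ) 1) :
    qgamma k (AffineMap.lineMap u y t) x ≤ qgamma k u x + weakDefect u y x := by
  obtain ⟨j, hj⟩ := exists_mem_vcell u x
  rw [qgamma_eq_iff_mem_vcell.2 hj]
  calc qgamma k (AffineMap.lineMap u y t) x ≤ ‖x - AffineMap.lineMap (u j) (y j) t‖ ^ 2 := by
        simpa only [AffineMap.pi_lineMap_apply] using qgamma_le (AffineMap.lineMap u y t) x j
    _ ≤ ‖x - u j‖ ^ 2 + 2 * |⟪x - y j, u j - y j⟫| := norm_sub_lineMap_sq_le x (u j) (y j) ht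
    _ ≤ ‖x - u j‖ ^ 2 + weakDefect u y x := by
        gcongr
        exact Finset.single_le_sum (f := fun i ↦ 2 * |⟪x - y i, u i - y i⟫|)
          (fun _ _ ↦ by positivity) (Finset.mem_univ j)

lemma continuous_weakDefect (u y : Fin k → E) : Continuous (weakDefect u y) := by
  unfold weakDefect
  fun_prop

lemma norm_weakDefect_le {u y : Fin k → E} {x : E} {M : ℝ} (hu : ‖u‖ ≤ M) (hy : ‖y‖ ≤ M)
    (hx : ‖x‖ ≤ M) : ‖weakDefect u y x‖ ≤ ∑ _i : Fin k, 2 * ((2 * M) * (2 * M)) := by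
  rw [weakDefect, Real.norm_of_nonneg (Finset.sum_nonneg fun _ _ ↦ by positivity)]
  refine Finset.sum_le_sum fun i _ ↦ ?_
  have hui := (norm_le_pi_norm u i).trans hu
  have hyi := (norm_le_pi_norm y i).trans hy
  have hM : 0 ≤ M := (norm_nonneg x).trans hx
  gcongr
  refine (abs_real_inner_le_norm _ _).trans ?_
  gcongr
  · linarith [norm_sub_le x (y i)]
  · linarith [norm_sub_le (u i) (y i)]

lemma WeaklyTendsto.tendsto_weakDefect {u : ℕ → Fin k → E} {y : Fin k → E}
    (h : WeaklyTendsto u y) (x : E) : Tendsto (fun n ↦ weakDefect (u n) y x) atTop (𝓝 0) := by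
  rw [← Finset.sum_const_zero (s := (Finset.univ : Finset (Fin k)))]
  refine tendsto_finsetSum _ fun i _ ↦ ?_
  simpa [inner_sub_right] using
    ((h i (x - y i)).sub_const ⟪x - y i, y i⟫).abs.const_mul 2

end WeakConvergence

section Risk

variable {E : Type*} [NormedAddCommGroup E] [MeasurableSpace E] {k : ℕ} {P : Measure E} {M : ℝ}

lemma mbounded.ae_norm_le (hb : mbounded P M) : ∀ᵐ x ∂P, ‖x‖ ≤ M := by
  filter_upwards [measure_eq_zero_iff_ae_notMem.1 hb] with x hx
  simpa using hx

lemma qrisk_nonneg (c : Fin k → E) : 0 ≤ qrisk k P c :=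
  integral_nonneg (qgamma_nonneg c)

lemma mem_qopt_of_qrisk_le {c c' : Fin k → E} (hc : c ∈ qopt k P)
    (h : qrisk k P c' ≤ qrisk k P c) : c' ∈ qopt k P :=
  fun c'' ↦ h.trans (hc c'')

lemma qB_le {c : Fin k → E} (hc : c ∈ qopt k P) {i j : Fin k} (hij : i ≠ j) :
    qB k P ≤ ‖c i - c j‖ := by
  refine csInf_le ⟨0, ?_⟩ ⟨c, hc, i, j, hij, rfl⟩
  rintro _ ⟨c, -, i, j, -, rfl⟩
  exact norm_nonneg _

lemma qpmin_le {c : Fin k → E} (hc : c ∈ qopt k P) (i : Fin k) :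
    qpmin k P ≤ P.real (vcell k c i) := by
  refine csInf_le ⟨0, ?_⟩ ⟨c, hc, i, rfl⟩
  rintro _ ⟨c, -, i, rfl⟩
  exact measureReal_nonneg

lemma qseparated.le_qrisk_sub {ε : ℝ} (h : qseparated k P ε) {c cs : Fin k → E}
    (hc : IsLocalMin (qrisk k P) c) (hc' : c ∉ qopt k P) (hcs : cs ∈ qopt k P) :
    ε ≤ qrisk k P c - qrisk k P cs := by
  rw [← h cs hcs]
  refine csInf_le ⟨0, ?_⟩ ⟨c, hc, hc', rfl⟩
  rintro _ ⟨c, -, -, rfl⟩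
  exact sub_nonneg.2 (hcs c)

variable [IsFiniteMeasure P]

lemma measureReal_cthickening_nbd_le_pweight {c : Fin k → E} (hc : c ∈ qopt k P) (t : ℝ) :
    P.real (cthickening t (nbd k c)) ≤ pweight k P t := by
  refine le_csSup ⟨P.real Set.univ, ?_⟩ ⟨c, hc, rfl⟩
  rintro _ ⟨c, -, rfl⟩
  exact measureReal_mono (Set.subset_univ _)

lemma margin.measure_nbd_eq_zero {r0 : ℝ} (hmargin : margin k P M r0) {cs : Fin k → E}
    (hcs : cs ∈ qopt k P) : P (nbd k cs) = 0 := by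
  have hle := (measureReal_cthickening_nbd_le_pweight hcs 0).trans
    (hmargin.2.2 0 le_rfl hmargin.1.le)
  rw [mul_zero, zero_div] at hle
  exact measure_mono_null (self_subset_cthickening _)
    ((measureReal_eq_zero_iff).1 (hle.antisymm measureReal_nonneg))

variable [BorelSpace E] [SecondCountableTopology E]

lemma mbounded.integrable_of_continuous (hb : mbounded P M) {F : Type*} [NormedAddCommGroup F]
    {f : E → F} (hf : Continuous f) {C : ℝ} (hC : ∀ x, ‖x‖ ≤ M → ‖f x‖ ≤ C) : Integrable f P :=
  Integrable.of_bound hf.aestronglyMeasurable C (hb.ae_norm_le.mono hC)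

lemma mbounded.integrable_id (hb : mbounded P M) : Integrable (fun x : E ↦ x) P :=
  hb.integrable_of_continuous continuous_id fun _ hx ↦ hx

lemma mbounded.integrable_norm_sub_sq (hb : mbounded P M) (y : E) :
    Integrable (fun x ↦ ‖x - y‖ ^ 2) P := by
  refine hb.integrable_of_continuous (by fun_prop) (C := (M + ‖y‖) ^ 2) fun x hx ↦ ?_
  rw [norm_pow, norm_norm]
  gcongr
  linarith [norm_sub_le x y]

variable [Nonempty (Fin k)]

lemma mbounded.integrable_qgamma (hb : mbounded P M) (c : Fin k → E) :
    Integrable (qgamma k c) P := by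
  refine (hb.integrable_norm_sub_sq (c (Classical.arbitrary _))).mono'
    (continuous_qgamma c).aestronglyMeasurable (ae_of_all _ fun x ↦ ?_)
  rw [Real.norm_of_nonneg (qgamma_nonneg c x)]
  exact qgamma_le c x _

lemma qrisk_le_qrisk_add_integral (hb : mbounded P M) {c c' : Fin k → E} {g : E → ℝ}
    (hg : Integrable g P) (h : ∀ x, ‖x‖ ≤ M → qgamma k c' x ≤ qgamma k c x + g x) :
    qrisk k P c' ≤ qrisk k P c + ∫ x, g x ∂P := by
  rw [qrisk, qrisk, ← integral_add (hb.integrable_qgamma c) hg]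
  exact integral_mono_ae (hb.integrable_qgamma c') ((hb.integrable_qgamma c).add hg)
    (hb.ae_norm_le.mono h)

lemma qrisk_le_qrisk_add_norm_sub (hb : mbounded P M) {c c' : Fin k → E} (hc : ‖c‖ ≤ M)
    (hc' : ‖c'‖ ≤ M) : qrisk k P c' ≤ qrisk k P c + 4 * M * P.real Set.univ * ‖c' - c‖ := by
  have hM : 0 ≤ M := (norm_nonneg c).trans hc
  have hconst : 4 * M * P.real Set.univ * ‖c' - c‖ = ∫ _, 4 * M * ‖c' - c‖ ∂P := by
    rw [integral_const, smul_eq_mul]; ring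
  rw [hconst]
  refine qrisk_le_qrisk_add_integral hb (integrable_const _) fun x hx ↦ ?_
  obtain ⟨j, hj⟩ := exists_mem_vcell c x
  rw [qgamma_eq_iff_mem_vcell.2 hj]
  calc qgamma k c' x ≤ ‖x - c' j‖ ^ 2 := qgamma_le c' x j
    _ ≤ ‖x - c j‖ ^ 2 + 4 * M * ‖c' j - c j‖ :=
        norm_sub_sq_le_add hx ((norm_le_pi_norm c' j).trans hc') ((norm_le_pi_norm c j).trans hc)
    _ ≤ ‖x - c j‖ ^ 2 + 4 * M * ‖c' - c‖ := by gcongr; exact norm_le_pi_norm (c' - c) j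

lemma qrisk_update_le (hb : mbounded P M) (c : Fin k → E) (i : Fin k) (y : E) :
    qrisk k P (Function.update c i y) ≤
      qrisk k P c + ∫ x in vcell k c i, (‖x - y‖ ^ 2 - ‖x - c i‖ ^ 2) ∂P := by
  have hmeas := (isClosed_vcell c i).measurableSet
  rw [← integral_indicator hmeas]
  refine qrisk_le_qrisk_add_integral hb
    (((hb.integrable_norm_sub_sq y).sub (hb.integrable_norm_sub_sq (c i))).indicator hmeas)
    fun x _ ↦ ?_
  by_cases hxi : x ∈ vcell k c i
  · rw [Set.indicator_of_mem hxi, qgamma_eq_iff_mem_vcell.2 hxi, add_sub_cancel]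
    simpa using qgamma_le (Function.update c i y) x i
  · obtain ⟨j, hj⟩ := exists_mem_vcell c x
    have hji : j ≠ i := by rintro rfl; exact hxi hj
    rw [Set.indicator_of_notMem hxi, qgamma_eq_iff_mem_vcell.2 hj, add_zero]
    simpa [hji] using qgamma_le (Function.update c i y) x j

lemma qrisk_lt_of_qgamma_lt (hb : mbounded P M) {c c' : Fin k → E}
    (hle : ∀ x, qgamma k c' x ≤ qgamma k c x) {x₀ : E} (hx₀ : x₀ ∈ P.support)
    (hlt : qgamma k c' x₀ < qgamma k c x₀) : qrisk k P c' < qrisk k P c := by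
  have hint := hb.integrable_qgamma c
  have hint' := hb.integrable_qgamma c'
  refine (integral_mono hint' hint hle).lt_of_ne fun heq ↦ ?_
  have hae := (integral_eq_iff_of_ae_le hint' hint (ae_of_all _ hle)).1 heq
  have hopen : IsOpen {x | qgamma k c' x < qgamma k c x} :=
    isOpen_lt (continuous_qgamma c') (continuous_qgamma c)
  refine ((Measure.mem_support_iff_forall x₀).1 hx₀ _ (hopen.mem_nhds hlt)).ne' ?_
  exact measure_mono_null (fun x hx ↦ hx.ne) hae

lemma exists_norm_le_qrisk_le [InnerProductSpace ℝ E] [CompleteSpace E] (hb : mbounded P M)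
    (hM : 0 ≤ M) (c : Fin k → E) :
    ∃ c', ‖c'‖ ≤ M ∧ qrisk k P c' ≤ qrisk k P c ∧ ∀ y, ‖y‖ ≤ M → ‖c' - y‖ ≤ ‖c - y‖ := by
  choose c' hc' hdist using fun i ↦ exists_mem_forall_norm_sub_le (nonempty_closedBall.2 hM)
    isClosed_closedBall.isComplete (convex_closedBall (0 : E) M) (c i)
  simp only [mem_closedBall_zero_iff] at hc' hdist
  refine ⟨c', (pi_norm_le_iff_of_nonempty c').2 hc', ?_, fun y hy ↦ ?_⟩
  · have hle := qrisk_le_qrisk_add_integral (c := c) (c' := c') hb (g := fun _ ↦ 0)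
      (integrable_zero E ℝ P) ?_
    · simpa using hle
    intro x hx
    obtain ⟨j, hj⟩ := exists_mem_vcell c x
    rw [qgamma_eq_iff_mem_vcell.2 hj, add_zero]
    refine (qgamma_le c' x j).trans ?_
    gcongr
    exact hdist j x hx
  · refine (pi_norm_le_iff_of_nonempty _).2 fun i ↦ ?_
    rw [Pi.sub_apply, norm_sub_rev]
    refine (hdist i (y i) ((norm_le_pi_norm y i).trans hy)).trans ?_
    rw [norm_sub_rev]
    exact norm_le_pi_norm (c - y) i

end Risk

section Minimization

variable {E : Type*} [NormedAddCommGroup E] [InnerProductSpace ℝ E] [MeasurableSpace E]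
  [BorelSpace E] {k : ℕ} [Nonempty (Fin k)] {P : Measure E} [IsFiniteMeasure P] {M : ℝ}

lemma WeaklyTendsto.tendsto_integral_weakDefect (hb : mbounded P M) {u : ℕ → Fin k → E}
    {y : Fin k → E} (h : WeaklyTendsto u y) (hu : ∀ n, ‖u n‖ ≤ M) :
    Tendsto (fun n ↦ ∫ x, weakDefect (u n) y x ∂P) atTop (𝓝 0) := by
  rw [← integral_zero E ℝ (μ := P)]
  refine tendsto_integral_of_dominated_convergence (fun _ ↦ ∑ _i : Fin k, 2 * ((2 * M) * (2 * M)))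
    (fun n ↦ (continuous_weakDefect (u n) y).aestronglyMeasurable) (integrable_const _)
    (fun n ↦ ?_) (ae_of_all _ h.tendsto_weakDefect)
  filter_upwards [hb.ae_norm_le] with x hx
  exact norm_weakDefect_le (hu n) (h.norm_le hu) hx

variable [SecondCountableTopology E]

lemma qrisk_lineMap_le (hb : mbounded P M) {u y : Fin k → E} (hu : ‖u‖ ≤ M) (hy : ‖y‖ ≤ M)
    {t : ℝ} (ht : t ∈ Set.Icc (0 : ℝ) 1) :
    qrisk k P (AffineMap.lineMap u y t) ≤ qrisk k P u + ∫ x, weakDefect u y x ∂P :=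
  qrisk_le_qrisk_add_integral hb (hb.integrable_of_continuous (continuous_weakDefect u y)
    fun _ ↦ norm_weakDefect_le hu hy) fun x _ ↦ qgamma_lineMap_le u y x ht

variable [CompleteSpace E]

lemma exists_weaklyTendsto_qrisk_lineMap_le (hb : mbounded P M) {A : Set (Fin k → E)}
    (hA : A.Nonempty) (hAM : ∀ a ∈ A, ‖a‖ ≤ M) :
    ∃ (u : ℕ → Fin k → E) (y : Fin k → E) (b : ℕ → ℝ), (∀ n, u n ∈ A) ∧ WeaklyTendsto u y ∧
      Tendsto b atTop (𝓝 (sInf (qrisk k P '' A))) ∧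
      ∀ n, ∀ t ∈ Set.Icc (0 : ℝ) 1, qrisk k P (AffineMap.lineMap (u n) y t) ≤ b n := by
  have hbdd : BddBelow (qrisk k P '' A) := ⟨0, by rintro _ ⟨c, -, rfl⟩; exact qrisk_nonneg c⟩
  obtain ⟨r, -, hr, hrA⟩ := exists_seq_tendsto_sInf (hA.image (qrisk k P)) hbdd
  choose v hvA hv using hrA
  obtain ⟨y, φ, hφ, hy⟩ := exists_weaklyTendsto_subseq fun n ↦ hAM _ (hvA n)
  have hM : ∀ n, ‖(v ∘ φ) n‖ ≤ M := fun n ↦ hAM _ (hvA (φ n))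
  refine ⟨v ∘ φ, y, fun n ↦ r (φ n) + ∫ x, weakDefect (v (φ n)) y x ∂P, fun n ↦ hvA (φ n), hy,
    ?_, fun n t ht ↦ ?_⟩
  · simpa using (hr.comp hφ.tendsto_atTop).add (hy.tendsto_integral_weakDefect hb hM)
  · simp only [← hv]
    exact qrisk_lineMap_le hb (hM n) (hy.norm_le hM) ht

lemma exists_isMinOn_qrisk_of_eq (hb : mbounded P M) (hM : 0 ≤ M) (i j : Fin k) :
    ∃ y : Fin k → E, y i = y j ∧
      ∀ c : Fin k → E, ‖c‖ ≤ M → c i = c j → qrisk k P y ≤ qrisk k P c := by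
  let A : Set (Fin k → E) := {c | ‖c‖ ≤ M ∧ c i = c j}
  obtain ⟨u, y, b, huA, hy, hblim, hle⟩ :=
    exists_weaklyTendsto_qrisk_lineMap_le (A := A) hb ⟨0, by simpa [A] using hM⟩ fun _ h ↦ h.1
  refine ⟨y, ext_inner_left ℝ fun x ↦ tendsto_nhds_unique (hy i x) ?_, fun c hc hcij ↦ ?_⟩
  · simpa only [(huA _).2] using hy j x
  · have hyinf : qrisk k P y ≤ sInf (qrisk k P '' A) :=
      ge_of_tendsto' hblim fun n ↦ by simpa using hle n 1 (by simp)
    exact hyinf.trans (csInf_le ⟨0, by rintro _ ⟨c, -, rfl⟩; exact qrisk_nonneg c⟩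
      ⟨c, ⟨hc, hcij⟩, rfl⟩)

-- `A` need not be weakly closed nor open: it is the barrier that keeps the weak limit of a
-- minimizing sequence, and then a neighbourhood of that limit, inside `A`.
lemma exists_isLocalMin_of_barrier (hb : mbounded P M) {A : Set (Fin k → E)}
    (hAM : ∀ a ∈ A, ‖a‖ ≤ M) {h : ℝ}
    (hbarrier : ∀ a ∈ A, ∀ z, ‖z‖ ≤ M → z ∉ A →
      ∃ t ∈ Set.Icc (0 : ℝ) 1, h ≤ qrisk k P (AffineMap.lineMap a z t))
    {c : Fin k → E} (hc : c ∈ A) (hch : qrisk k P c < h) :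
    ∃ y ∈ A, IsLocalMin (qrisk k P) y ∧ qrisk k P y ≤ qrisk k P c := by
  have hM : 0 ≤ M := (norm_nonneg c).trans (hAM c hc)
  have hinf : ∀ a ∈ A, sInf (qrisk k P '' A) ≤ qrisk k P a := fun a ha ↦
    csInf_le ⟨0, by rintro _ ⟨c, -, rfl⟩; exact qrisk_nonneg c⟩ ⟨a, ha, rfl⟩
  obtain ⟨u, y, b, huA, hy, hblim, hle⟩ := exists_weaklyTendsto_qrisk_lineMap_le hb ⟨c, hc⟩ hAM
  have hyM : ‖y‖ ≤ M := hy.norm_le fun n ↦ hAM _ (huA n)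
  have hyinf : qrisk k P y ≤ sInf (qrisk k P '' A) :=
    ge_of_tendsto' hblim fun n ↦ by simpa using hle n 1 (by simp)
  have hyA : y ∈ A := by
    by_contra hyA
    refine (ge_of_tendsto' hblim fun n ↦ ?_).not_gt ((hinf c hc).trans_lt hch)
    obtain ⟨t, ht, hht⟩ := hbarrier (u n) (huA n) y hyM hyA
    exact hht.trans (hle n t ht)
  refine ⟨y, hyA, ?_, hyinf.trans (hinf c hc)⟩
  have hnear : ∀ᶠ z in 𝓝 y, qrisk k P y + 4 * M * P.real Set.univ * ‖z - y‖ < h := by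
    refine ContinuousAt.eventually_lt (by fun_prop) continuousAt_const ?_
    simpa using (hyinf.trans (hinf c hc)).trans_lt hch
  filter_upwards [hnear] with z hz
  obtain ⟨z', hz'M, hz'z, hdist⟩ := exists_norm_le_qrisk_le hb hM z
  suffices hz'A : z' ∈ A from hyinf.trans ((hinf z' hz'A).trans hz'z)
  by_contra hz'A
  obtain ⟨t, ht, hht⟩ := hbarrier y hyA z' hz'M hz'A
  have hlip := qrisk_le_qrisk_add_norm_sub hb hyM (norm_lineMap_le hyM hz'M ht)
  have hstep : ‖AffineMap.lineMap y z' t - y‖ ≤ ‖z - y‖ := by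
    rw [AffineMap.lineMap_apply_module', add_sub_cancel_right, norm_smul,
      Real.norm_of_nonneg ht.1]
    exact (mul_le_of_le_one_left (norm_nonneg _) ht.2).trans (hdist y hyM)
  refine (hht.trans (hlip.trans ?_)).not_gt hz
  gcongr

end Minimization

section OptimalCodebooks

variable {E : Type*} [NormedAddCommGroup E] [MeasurableSpace E] [SecondCountableTopology E]
  {k : ℕ} {P : Measure E} {M : ℝ}

lemma suppGT.exists_mem_support_notMem_range (hsupp : suppGT P k) (c : Fin k → E) :
    ∃ x ∈ P.support, x ∉ Set.range c := by
  classical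
  have hpos := hsupp (Finset.univ.image c) (Finset.card_image_le.trans (by simp))
  obtain ⟨x, hxc, hx⟩ := Measure.nonempty_inter_support_of_pos (pos_iff_ne_zero.2 hpos)
  exact ⟨x, hx, by simpa using hxc⟩

variable [BorelSpace E] [IsFiniteMeasure P]

-- A duplicated code point can be moved for free onto a support point that is not yet a code point.
lemma injective_of_mem_qopt (hb : mbounded P M) (hsupp : suppGT P k) {c : Fin k → E}
    (hc : c ∈ qopt k P) : Function.Injective c := by
  intro i j heq
  by_contra hij
  have : Nonempty (Fin k) := ⟨i⟩
  obtain ⟨x₀, hx₀, hx₀c⟩ := hsupp.exists_mem_support_notMem_range c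
  refine (qrisk_lt_of_qgamma_lt hb (fun x ↦ qgamma_update_le hij heq x x₀) hx₀ ?_).not_ge
    (hc (Function.update c i x₀))
  obtain ⟨l, hl⟩ := exists_mem_vcell c x₀
  calc qgamma k (Function.update c i x₀) x₀ ≤ 0 := by
        simpa using qgamma_le (Function.update c i x₀) x₀ i
    _ < ‖x₀ - c l‖ ^ 2 :=
        pow_pos (norm_pos_iff.2 (sub_ne_zero.2 fun h ↦ hx₀c ⟨l, h.symm⟩)) 2
    _ = qgamma k c x₀ := (qgamma_eq_iff_mem_vcell.2 hl).symm

variable [Nontrivial (Fin k)]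

lemma measureReal_vcell_pos (hb : mbounded P M) (hsupp : suppGT P k) {c : Fin k → E}
    (hc : c ∈ qopt k P) (i : Fin k) : 0 < P.real (vcell k c i) := by
  refine measureReal_nonneg.lt_of_ne fun h0 ↦ ?_
  obtain ⟨j, hji⟩ := exists_ne i
  have hmerge := qrisk_update_le hb c i (c j)
  rw [setIntegral_measure_zero _ ((measureReal_eq_zero_iff).1 h0.symm), add_zero] at hmerge
  refine hji (injective_of_mem_qopt hb hsupp (mem_qopt_of_qrisk_le hc hmerge) ?_)
  simp [hji]

variable [InnerProductSpace ℝ E] [CompleteSpace E]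

lemma setIntegral_vcell_sub_eq_zero (hb : mbounded P M) (hsupp : suppGT P k) {c : Fin k → E}
    (hc : c ∈ qopt k P) (i : Fin k) : ∫ x in vcell k c i, (x - c i) ∂P = 0 := by
  set w := ∫ x in vcell k c i, (x - c i) ∂P with hw
  set m := P.real (vcell k c i)
  have hm : 0 < m := measureReal_vcell_pos hb hsupp hc i
  have hmove := (hc _).trans (qrisk_update_le hb c i (c i + m⁻¹ • w))
  rw [integral_norm_sub_sq_sub_norm_sub_sq hb.integrable_id.restrict, add_sub_cancel_left, ← hw,
    measureReal_restrict_apply_univ, norm_smul, Real.norm_of_nonneg (by positivity),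
    inner_smul_left, real_inner_self_eq_norm_sq] at hmove
  have hgain : m * (m⁻¹ * ‖w‖) ^ 2 - 2 * (m⁻¹ * ‖w‖ ^ 2) = -(m⁻¹ * ‖w‖ ^ 2) := by
    field_simp; ring
  have hle : m⁻¹ * ‖w‖ ^ 2 ≤ 0 := by
    simp only [conj_trivial] at hmove
    linarith
  exact norm_eq_zero.1 (pow_eq_zero_iff two_ne_zero |>.1
    ((nonpos_of_mul_nonpos_right hle (by positivity)).antisymm (by positivity)))

lemma norm_le_of_mem_qopt (hb : mbounded P M) (hsupp : suppGT P k) {c : Fin k → E}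
    (hc : c ∈ qopt k P) : ‖c‖ ≤ M := by
  refine (pi_norm_le_iff_of_nonempty c).2 fun i ↦ ?_
  have hm := measureReal_vcell_pos hb hsupp hc i
  have hcentroid := setIntegral_vcell_sub_eq_zero hb hsupp hc i
  rw [integral_sub hb.integrable_id.restrict (integrable_const _), setIntegral_const,
    sub_eq_zero] at hcentroid
  have hle : ‖∫ x in vcell k c i, x ∂P‖ ≤ M * P.real (vcell k c i) :=
    norm_setIntegral_le_of_norm_le_const_ae (measure_lt_top _ _) (ae_restrict_of_ae hb.ae_norm_le)
  rw [hcentroid, norm_smul, Real.norm_of_nonneg hm.le, mul_comm] at hle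
  exact le_of_mul_le_mul_right hle hm

lemma exists_pos_qrisk_add_le_of_eq (hb : mbounded P M) (hM : 0 ≤ M) (hsupp : suppGT P k)
    {cs : Fin k → E} (hcs : cs ∈ qopt k P) :
    ∃ η > 0, ∀ c : Fin k → E, ‖c‖ ≤ M → ∀ i j, i ≠ j → c i = c j →
      qrisk k P cs + η ≤ qrisk k P c := by
  choose y hy hmin using fun p : {p : Fin k × Fin k // p.1 ≠ p.2} ↦
    exists_isMinOn_qrisk_of_eq (P := P) hb hM p.1.1 p.1.2
  obtain ⟨a, b, hab⟩ := exists_pair_ne (Fin k)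
  have : Nonempty {p : Fin k × Fin k // p.1 ≠ p.2} := ⟨⟨(a, b), hab⟩⟩
  obtain ⟨p, hp⟩ := Finite.exists_min fun p ↦ qrisk k P (y p)
  refine ⟨qrisk k P (y p) - qrisk k P cs, sub_pos.2 (lt_of_not_ge fun hle ↦ ?_),
    fun c hc i j hij heq ↦ ?_⟩
  · exact p.2 (injective_of_mem_qopt hb hsupp (mem_qopt_of_qrisk_le hcs hle) (hy p))
  · linarith [hp ⟨(i, j), hij⟩, hmin ⟨(i, j), hij⟩ c hc heq]

-- Merging `c i` into `c j` creates a duplicate, at a cost of at most `4 M ‖c i - c j‖` per unit of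
-- mass of the cell of `c i`.
lemma exists_pos_le_norm_sub_mul_measureReal_vcell (hb : mbounded P M) (hM : 0 < M)
    (hsupp : suppGT P k) (hne : (qopt k P).Nonempty) :
    ∃ η > 0, ∀ c ∈ qopt k P, ∀ i j : Fin k, i ≠ j →
      η ≤ ‖c i - c j‖ * P.real (vcell k c i) := by
  obtain ⟨cs, hcs⟩ := hne
  obtain ⟨η, hη, hgap⟩ := exists_pos_qrisk_add_le_of_eq hb hM.le hsupp hcs
  refine ⟨η / (4 * M), by positivity, fun c hc i j hij ↦ ?_⟩
  have hcM := norm_le_of_mem_qopt hb hsupp hc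
  have hcM' : ∀ l, ‖c l‖ ≤ M := fun l ↦ (norm_le_pi_norm c l).trans hcM
  have hupdM : ‖Function.update c i (c j)‖ ≤ M := by
    refine (pi_norm_le_iff_of_nonempty _).2 fun l ↦ ?_
    rw [Function.update_apply]
    split_ifs
    exacts [hcM' j, hcM' l]
  have hcost : ∫ x in vcell k c i, (‖x - c j‖ ^ 2 - ‖x - c i‖ ^ 2) ∂P ≤
      P.real (vcell k c i) * (4 * M * ‖c i - c j‖) := by
    rw [← smul_eq_mul, ← setIntegral_const]
    refine integral_mono_ae ((hb.integrable_norm_sub_sq _).sub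
      (hb.integrable_norm_sub_sq _)).restrict (integrable_const _) (ae_restrict_of_ae ?_)
    filter_upwards [hb.ae_norm_le] with x hx
    rw [norm_sub_rev (c i), sub_le_iff_le_add']
    exact norm_sub_sq_le_add hx (hcM' j) (hcM' i)
  have hdup := hgap _ hupdM i j hij (by simp [hij.symm])
  rw [div_le_iff₀ (by positivity)]
  linarith [qrisk_update_le hb c i (c j), hc cs]

lemma qB_pos (hb : mbounded P M) (hM : 0 < M) (hsupp : suppGT P k)
    (hne : (qopt k P).Nonempty) : 0 < qB k P := by
  obtain ⟨η, hη, hle⟩ := exists_pos_le_norm_sub_mul_measureReal_vcell hb hM hsupp hne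
  obtain ⟨cs, hcs⟩ := hne
  obtain ⟨i, j, hij⟩ := exists_pair_ne (Fin k)
  have hmass : 0 < P.real Set.univ :=
    (measureReal_vcell_pos hb hsupp hcs i).trans_le (measureReal_mono (Set.subset_univ _))
  refine (div_pos hη hmass).trans_le (le_csInf ⟨_, cs, hcs, i, j, hij, rfl⟩ ?_)
  rintro _ ⟨c, hc, i, j, hij, rfl⟩
  rw [div_le_iff₀ hmass]
  exact (hle c hc i j hij).trans
    (mul_le_mul_of_nonneg_left (measureReal_mono (Set.subset_univ _)) (norm_nonneg _))

lemma qpmin_pos (hb : mbounded P M) (hM : 0 < M) (hsupp : suppGT P k)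
    (hne : (qopt k P).Nonempty) : 0 < qpmin k P := by
  obtain ⟨η, hη, hle⟩ := exists_pos_le_norm_sub_mul_measureReal_vcell hb hM hsupp hne
  obtain ⟨cs, hcs⟩ := hne
  refine (show 0 < η / (2 * M) by positivity).trans_le
    (le_csInf ⟨_, cs, hcs, Classical.arbitrary _, rfl⟩ ?_)
  rintro _ ⟨c, hc, i, rfl⟩
  obtain ⟨j, hji⟩ := exists_ne i
  have hcM : ∀ l, ‖c l‖ ≤ M := fun l ↦
    (norm_le_pi_norm c l).trans (norm_le_of_mem_qopt hb hsupp hc)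
  rw [div_le_iff₀' (by positivity)]
  refine (hle c hc i j hji.symm).trans (mul_le_mul_of_nonneg_right ?_ measureReal_nonneg)
  linarith [norm_sub_le (c i) (c j), hcM i, hcM j]

end OptimalCodebooks

section Margin

/-- The radius of the balls around the optimal codebooks on which the margin condition makes the
excess risk grow quadratically: for a codebook in such a ball, every point of `B(0, M)` that falls
in a cell of another index than its optimal one is within `r0` of the optimal cell boundaries. -/
def basinRadius {E : Type*} [NormedAddCommGroup E] [MeasurableSpace E] (k : ℕ) (P : Measure E)
    (M r0 : ℝ) : ℝ := qB k P * r0 / (4 * M)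

lemma four_div_qpmin_mul_basinRadius_sq {E : Type*} [NormedAddCommGroup E] [MeasurableSpace E]
    {k : ℕ} {P : Measure E} {M r0 : ℝ} :
    4 / (qpmin k P * basinRadius k P M r0 ^ 2) =
      64 * M ^ 2 / (qpmin k P * qB k P ^ 2 * r0 ^ 2) := by
  rw [basinRadius, div_pow, mul_pow, mul_pow, ← mul_div_assoc, div_div_eq_mul_div]
  ring

/-- The codebooks of `B(0, M)^k` at Euclidean distance at least `r` from every optimal codebook;
`‖c‖` is the sup norm over the code points. -/
def farCodebooks {E : Type*} [NormedAddCommGroup E] [MeasurableSpace E] (k : ℕ) (P : Measure E)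
    (M r : ℝ) : Set (Fin k → E) :=
  {c | ‖c‖ ≤ M ∧ ∀ cs ∈ qopt k P, r ^ 2 ≤ ∑ i, ‖c i - cs i‖ ^ 2}

variable {E : Type*} [NormedAddCommGroup E] [InnerProductSpace ℝ E] [CompleteSpace E]
  [MeasurableSpace E] [BorelSpace E] [SecondCountableTopology E] {k : ℕ} [Nontrivial (Fin k)]
  {P : Measure E} [IsFiniteMeasure P] {M r0 : ℝ}

lemma margin.qB_le_and_radius_lt (hmargin : margin k P M r0) (hM : 0 < M) (hsupp : suppGT P k)
    (hne : (qopt k P).Nonempty) : qB k P ≤ 2 * M ∧ r0 < 2 * M := by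
  obtain ⟨-, hb, hweight⟩ := hmargin
  have hp := qpmin_pos hb hM hsupp hne
  obtain ⟨cs, hcs⟩ := hne
  obtain ⟨i, j, hij⟩ := exists_pair_ne (Fin k)
  have hcsM : ∀ l, ‖cs l‖ ≤ M := fun l ↦
    (norm_le_pi_norm cs l).trans (norm_le_of_mem_qopt hb hsupp hcs)
  have hB : qB k P ≤ 2 * M := by
    linarith [qB_le hcs hij, norm_sub_le (cs i) (cs j), hcsM i, hcsM j]
  refine ⟨hB, lt_of_not_ge fun hr ↦ ?_⟩
  obtain ⟨z, hz, hzN⟩ := exists_mem_segment_mem_nbd hij (mem_vcell_self cs i) (mem_vcell_self cs j)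
  have hzM : ‖z‖ ≤ M := by
    simpa using (convex_closedBall (0 : E) M).segment_subset (by simpa using hcsM i)
      (by simpa using hcsM j) hz
  have hcover : P (cthickening (2 * M) (nbd k cs))ᶜ = 0 := by
    refine measure_mono_null (Set.compl_subset_compl.2 fun x hx ↦ ?_) hb
    refine mem_cthickening_of_dist_le x z _ _ hzN ?_
    rw [mem_closedBall_zero_iff] at hx
    linarith [dist_eq_norm x z, norm_sub_le x z]
  have hmass : P.real (cthickening (2 * M) (nbd k cs)) = P.real Set.univ := by
    rw [measureReal_def, measureReal_def, measure_of_measure_compl_eq_zero hcover]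
  have hfull : P.real Set.univ ≤ qB k P * qpmin k P * (2 * M) / (128 * M ^ 2) :=
    hmass ▸ (measureReal_cthickening_nbd_le_pweight hcs _).trans (hweight _ (by positivity) hr)
  have hsmall : qB k P * qpmin k P * (2 * M) / (128 * M ^ 2) ≤ qpmin k P / 32 := by
    calc qB k P * qpmin k P * (2 * M) / (128 * M ^ 2)
        ≤ 2 * M * qpmin k P * (2 * M) / (128 * M ^ 2) := by gcongr
      _ = qpmin k P / 32 := by field_simp; norm_num
  have hpmass : qpmin k P ≤ P.real Set.univ :=
    (qpmin_le hcs i).trans (measureReal_mono (Set.subset_univ _))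
  linarith

lemma margin.basinRadius_pos (hmargin : margin k P M r0) (hM : 0 < M) (hsupp : suppGT P k)
    (hne : (qopt k P).Nonempty) : 0 < basinRadius k P M r0 := by
  have hB := qB_pos hmargin.2.1 hM hsupp hne
  have hr0 := hmargin.1
  unfold basinRadius
  positivity

lemma margin.basinRadius_le (hmargin : margin k P M r0) (hM : 0 < M) (hsupp : suppGT P k)
    (hne : (qopt k P).Nonempty) : basinRadius k P M r0 ≤ M := by
  obtain ⟨hB, hr⟩ := hmargin.qB_le_and_radius_lt hM hsupp hne
  have hr0 := hmargin.1
  rw [basinRadius, div_le_iff₀ (by positivity)]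
  calc qB k P * r0 ≤ 2 * M * (2 * M) := by gcongr
    _ = M * (4 * M) := by ring

lemma sum_measureReal_vcell_mul_le (hb : mbounded P M) (hM : 0 < M) (hsupp : suppGT P k)
    {c cs : Fin k → E} (hcs : cs ∈ qopt k P) (hnull : P (nbd k cs) = 0) (hc : ‖c‖ ≤ M) :
    ∑ i, P.real (vcell k cs i) * ‖c i - cs i‖ ^ 2 ≤ qrisk k P c - qrisk k P cs +
      P.real (cthickening (4 * M * ‖c - cs‖ / qB k P) (nbd k cs)) * (8 * M * ‖c - cs‖) := by
  set K := cthickening (4 * M * ‖c - cs‖ / qB k P) (nbd k cs)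
  have hK : MeasurableSet K := isClosed_cthickening.measurableSet
  have hV := fun i ↦ (isClosed_vcell cs i).measurableSet
  have hγ : Integrable (fun x ↦ qgamma k c x - qgamma k cs x) P :=
    (hb.integrable_qgamma c).sub (hb.integrable_qgamma cs)
  have hind : Integrable (K.indicator fun _ ↦ 8 * M * ‖c - cs‖) P :=
    (integrable_const _).indicator hK
  have hint : Integrable (fun x ↦ qgamma k c x - qgamma k cs x +
      K.indicator (fun _ ↦ 8 * M * ‖c - cs‖) x) P := hγ.add hind
  have hcell : ∀ i, P.real (vcell k cs i) * ‖c i - cs i‖ ^ 2 ≤ ∫ x in vcell k cs i,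
      (qgamma k c x - qgamma k cs x + K.indicator (fun _ ↦ 8 * M * ‖c - cs‖) x) ∂P := by
    intro i
    have hcentroid := integral_norm_sub_sq_sub_norm_sub_sq
      (hb.integrable_id.restrict (s := vcell k cs i)) (cs i) (c i)
    rw [setIntegral_vcell_sub_eq_zero hb hsupp hcs i, inner_zero_right, mul_zero, sub_zero,
      measureReal_restrict_apply_univ] at hcentroid
    rw [← hcentroid]
    refine integral_mono_ae ((hb.integrable_norm_sub_sq _).sub
      (hb.integrable_norm_sub_sq _)).restrict hint.restrict ?_
    filter_upwards [ae_restrict_mem (hV i), ae_restrict_of_ae hb.ae_norm_le] with x hxi hx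
    exact norm_sub_sq_sub_le_of_mem_vcell (qB_pos hb hM hsupp ⟨cs, hcs⟩)
      (fun _ _ ↦ qB_le hcs) hc (norm_le_of_mem_qopt hb hsupp hcs) hx hxi
  have hdisj : Pairwise fun i j ↦ AEDisjoint P (vcell k cs i) (vcell k cs j) := fun i j hij ↦
    measure_mono_null (inter_vcell_subset_nbd cs hij) hnull
  have hcover : ⋃ i, vcell k cs i = Set.univ :=
    Set.iUnion_eq_univ_iff.2 fun x ↦ exists_mem_vcell cs x
  refine (Finset.sum_le_sum fun i _ ↦ hcell i).trans_eq ?_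
  rw [← tsum_fintype (L := .unconditional _),
    ← integral_iUnion_ae (fun i ↦ (hV i).nullMeasurableSet) hdisj hint.integrableOn, hcover,
    setIntegral_univ, integral_add hγ hind,
    integral_sub (hb.integrable_qgamma c) (hb.integrable_qgamma cs),
    integral_indicator hK, setIntegral_const, smul_eq_mul, qrisk, qrisk]

lemma margin.qpmin_mul_sum_le_qrisk_sub (hmargin : margin k P M r0) (hM : 0 < M)
    (hsupp : suppGT P k) {c cs : Fin k → E} (hcs : cs ∈ qopt k P) (hc : ‖c‖ ≤ M)
    (hnear : ∑ i, ‖c i - cs i‖ ^ 2 ≤ basinRadius k P M r0 ^ 2) :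
    3 / 4 * qpmin k P * ∑ i, ‖c i - cs i‖ ^ 2 ≤ qrisk k P c - qrisk k P cs := by
  have hb := hmargin.2.1
  have hB := qB_pos hb hM hsupp ⟨cs, hcs⟩
  have hp := qpmin_pos hb hM hsupp ⟨cs, hcs⟩
  set t := 4 * M * ‖c - cs‖ / qB k P with ht
  have htr : t ≤ r0 := by
    have := le_of_sq_le_sq ((norm_sub_sq_le_sum c cs).trans hnear)
      (hmargin.basinRadius_pos hM hsupp ⟨cs, hcs⟩).le
    rw [basinRadius, le_div_iff₀ (by positivity)] at this
    rw [ht, div_le_iff₀ hB]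
    linarith
  have hboundary : P.real (cthickening t (nbd k cs)) * (8 * M * ‖c - cs‖) ≤
      1 / 4 * qpmin k P * ∑ i, ‖c i - cs i‖ ^ 2 := by
    calc P.real (cthickening t (nbd k cs)) * (8 * M * ‖c - cs‖)
        ≤ qB k P * qpmin k P * t / (128 * M ^ 2) * (8 * M * ‖c - cs‖) := by
          gcongr
          exact (measureReal_cthickening_nbd_le_pweight hcs t).trans
            (hmargin.2.2 t (by positivity) htr)
      _ = 1 / 4 * qpmin k P * ‖c - cs‖ ^ 2 := by rw [ht]; field_simp; ring
      _ ≤ 1 / 4 * qpmin k P * ∑ i, ‖c i - cs i‖ ^ 2 := by gcongr; exact norm_sub_sq_le_sum c cs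
  have hcells : qpmin k P * ∑ i, ‖c i - cs i‖ ^ 2 ≤
      ∑ i, P.real (vcell k cs i) * ‖c i - cs i‖ ^ 2 := by
    rw [Finset.mul_sum]
    gcongr with i
    exact qpmin_le hcs i
  linarith [sum_measureReal_vcell_mul_le hb hM hsupp hcs (hmargin.measure_nbd_eq_zero hcs) hc]

lemma margin.exists_qrisk_add_le_lineMap (hmargin : margin k P M r0) (hM : 0 < M)
    (hsupp : suppGT P k) {cs : Fin k → E} (hcs : cs ∈ qopt k P) {a z : Fin k → E}
    (ha : a ∈ farCodebooks k P M (basinRadius k P M r0)) (hz : ‖z‖ ≤ M)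
    (hznear : z ∉ farCodebooks k P M (basinRadius k P M r0)) :
    ∃ t ∈ Set.Icc (0 : ℝ) 1, qrisk k P cs + 3 / 4 * (qpmin k P * basinRadius k P M r0 ^ 2) ≤
      qrisk k P (AffineMap.lineMap a z t) := by
  obtain ⟨cs', hcs', hlt⟩ :
      ∃ cs' ∈ qopt k P, ∑ i, ‖z i - cs' i‖ ^ 2 < basinRadius k P M r0 ^ 2 := by
    by_contra! hfar
    exact hznear ⟨hz, hfar⟩
  obtain ⟨t, ht, hsphere⟩ := exists_sum_norm_lineMap_sub_sq_eq (ha.2 cs' hcs') hlt.le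
  have hgrowth := hmargin.qpmin_mul_sum_le_qrisk_sub hM hsupp hcs' (norm_lineMap_le ha.1 hz ht)
    hsphere.le
  rw [hsphere] at hgrowth
  exact ⟨t, ht, by linarith [hcs cs']⟩

lemma margin.min_le_qrisk_sub (hmargin : margin k P M r0) (hM : 0 < M) (hsupp : suppGT P k)
    {ε : ℝ} {c cs : Fin k → E} (hcs : cs ∈ qopt k P)
    (hsep : ∀ y, IsLocalMin (qrisk k P) y → y ∉ qopt k P → ε ≤ qrisk k P y - qrisk k P cs)
    (hc : c ∈ farCodebooks k P M (basinRadius k P M r0)) :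
    min ε (3 / 4 * (qpmin k P * basinRadius k P M r0 ^ 2)) ≤ qrisk k P c - qrisk k P cs := by
  rw [min_le_iff, or_iff_not_imp_right, not_le, sub_lt_iff_lt_add']
  intro hlow
  obtain ⟨y, hyfar, hymin, hyc⟩ := exists_isLocalMin_of_barrier hmargin.2.1 (fun _ h ↦ h.1)
    (fun _ ha _ ↦ hmargin.exists_qrisk_add_le_lineMap hM hsupp hcs ha) hc hlow
  have hyopt : y ∉ qopt k P := fun hy ↦ by
    have hself : basinRadius k P M r0 ^ 2 ≤ 0 := by simpa using hyfar.2 y hy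
    exact hself.not_gt (pow_pos (hmargin.basinRadius_pos hM hsupp ⟨cs, hcs⟩) 2)
  linarith [hsep y hymin hyopt]

lemma margin.sum_le_const_mul_qrisk_sub (hmargin : margin k P M r0) (hM : 0 < M)
    (hsupp : suppGT P k) {c cs : Fin k → E} (hcs : cs ∈ qopt k P) (hc : ‖c‖ ≤ M)
    (hnear : ∑ i, ‖c i - cs i‖ ^ 2 ≤ basinRadius k P M r0 ^ 2) :
    ∑ i, ‖c i - cs i‖ ^ 2 ≤ 4 * k * M ^ 2 * (4 / (qpmin k P * basinRadius k P M r0 ^ 2)) *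
      (qrisk k P c - qrisk k P cs) := by
  have hp := qpmin_pos hmargin.2.1 hM hsupp ⟨cs, hcs⟩
  have hρ := hmargin.basinRadius_pos hM hsupp ⟨cs, hcs⟩
  have hρM := hmargin.basinRadius_le hM hsupp ⟨cs, hcs⟩
  have hk : (1 : ℝ) ≤ k := Nat.one_le_cast.2 (Fin.pos_iff_nonempty.2 inferInstance)
  have hone : 1 ≤ 12 * k * (M ^ 2 / basinRadius k P M r0 ^ 2) := by
    have : 1 ≤ M ^ 2 / basinRadius k P M r0 ^ 2 := (one_le_div (by positivity)).2 (by gcongr)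
    nlinarith
  calc ∑ i, ‖c i - cs i‖ ^ 2
      ≤ 12 * k * (M ^ 2 / basinRadius k P M r0 ^ 2) * ∑ i, ‖c i - cs i‖ ^ 2 :=
        le_mul_of_one_le_left (Finset.sum_nonneg fun _ _ ↦ by positivity) hone
    _ = 4 * k * M ^ 2 * (4 / (qpmin k P * basinRadius k P M r0 ^ 2)) *
          (3 / 4 * qpmin k P * ∑ i, ‖c i - cs i‖ ^ 2) := by field_simp; ring
    _ ≤ _ := by
        gcongr
        exact hmargin.qpmin_mul_sum_le_qrisk_sub hM hsupp hcs hc hnear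

end Margin

lemma one_le_max_mul_of_min_le {ε a x : ℝ} (hε : 0 < ε) (ha : 0 < a)
    (h : min ε (3 / 4 * a) ≤ x) : 1 ≤ max (1 / ε) (4 / a) * x := by
  have : 0 ≤ x := (le_min hε.le (by positivity)).trans h
  rcases min_le_iff.1 h with hεx | hax
  · calc 1 = 1 / ε * ε := by field_simp
      _ ≤ max (1 / ε) (4 / a) * x := by gcongr; exact le_max_left _ _
  · calc (1 : ℝ) ≤ 4 / a * (3 / 4 * a) := by field_simp; norm_num
      _ ≤ max (1 / ε) (4 / a) * x := by gcongr; exact le_max_right _ _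

theorem stmt5_general {E : Type*} [NormedAddCommGroup E] [InnerProductSpace ℝ E]
    [MeasurableSpace E] [BorelSpace E] [SecondCountableTopology E] [CompleteSpace E]
    (k : ℕ) (hk : 2 ≤ k) (P : Measure E) [IsFiniteMeasure P] (M : ℝ) (hM : 0 < M)
    (hsupp : suppGT P k) (r0 ε : ℝ) (hmargin : margin k P M r0) (hε : 0 < ε)
    (hsep : ∀ c, IsLocalMin (qrisk k P) c → c ∉ qopt k P →
      ∀ cs ∈ qopt k P, ε ≤ qrisk k P c - qrisk k P cs) :
    ∀ c : Fin k → E, (∀ i, ‖c i‖ ≤ M) →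
      ∀ cs ∈ qopt k P,
        (∀ cs' ∈ qopt k P, ∑ i, ‖c i - cs i‖ ^ 2 ≤ ∑ i, ‖c i - cs' i‖ ^ 2) →
        ∑ i, ‖c i - cs i‖ ^ 2 ≤
          (4 * k * M ^ 2 * max (1 / ε) (64 * M ^ 2 / (qpmin k P * qB k P ^ 2 * r0 ^ 2))) *
            (qrisk k P c - qrisk k P cs) := by
  intro c hc cs hcs hnearest
  have : Nontrivial (Fin k) := Fin.nontrivial_iff_two_le.2 hk
  have hcM : ‖c‖ ≤ M := (pi_norm_le_iff_of_nonempty c).2 hc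
  have hb := hmargin.2.1
  have hp := qpmin_pos hb hM hsupp ⟨cs, hcs⟩
  have hρ := hmargin.basinRadius_pos hM hsupp ⟨cs, hcs⟩
  rw [← four_div_qpmin_mul_basinRadius_sq]
  rcases le_total (∑ i, ‖c i - cs i‖ ^ 2) (basinRadius k P M r0 ^ 2) with hnear | hfar
  · refine (hmargin.sum_le_const_mul_qrisk_sub hM hsupp hcs hcM hnear).trans ?_
    gcongr
    · exact sub_nonneg.2 (hcs c)
    · exact le_max_right _ _
  · have hexcess := hmargin.min_le_qrisk_sub hM hsupp hcs (fun y hy hy' ↦ hsep y hy hy' cs hcs)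
      ⟨hcM, fun cs' hcs' ↦ hfar.trans (hnearest cs' hcs')⟩
    have hone := one_le_max_mul_of_min_le hε (by positivity) hexcess
    have hdiam : ∑ i, ‖c i - cs i‖ ^ 2 ≤ 4 * k * M ^ 2 := by
      simpa using sum_norm_sub_sq_le hcM (norm_le_of_mem_qopt hb hsupp hcs)
    rw [mul_assoc]
    exact hdiam.trans (le_mul_of_one_le_right (by positivity) hone)

/-- Proposition 2.2 (iv): `‖c − c*(c)‖² ≤ κ₀ ℓ(c, c*(c))`, where `c*(c)` is a
nearest optimal codebook and `κ₀ = 4kM² max(1/ε, 64M²/(p_min B² r₀²))`. -/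
theorem stmt5 [BorelSpace H] [SecondCountableTopology H] [CompleteSpace H]
    (k : ℕ) (hk : 2 ≤ k) (P : Measure H) [IsProbabilityMeasure P]
    (M : ℝ) (hM : 0 < M) (hsupp : suppGT P k) (hne : (qopt k P).Nonempty)
    (r0 ε : ℝ) (hmargin : margin k P M r0) (hε : 0 < ε) (hsep : qseparated k P ε) :
    ∀ c : Fin k → H, (∀ i, ‖c i‖ ≤ M) →
      ∀ cs ∈ qopt k P,
        (∀ cs' ∈ qopt k P, ∑ i, ‖c i - cs i‖ ^ 2 ≤ ∑ i, ‖c i - cs' i‖ ^ 2) →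
        ∑ i, ‖c i - cs i‖ ^ 2 ≤
          (4 * k * M ^ 2 * max (1 / ε) (64 * M ^ 2 / (qpmin k P * qB k P ^ 2 * r0 ^ 2))) *
            (qrisk k P c - qrisk k P cs) :=
  stmt5_general k hk P M hM hsupp r0 ε hmargin hε
    fun _ hc hc' _ hcs ↦ hsep.le_qrisk_sub hc hc' hcs

end
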